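/- Let X be an ideal of L⁰(Ω, Σ, ℙ) containing the constants and admitting a strictly positive order continuous functional, and let f ∈ X₊. For g ∈ X, the following are equivalent: (a) g ∈ L⁰(σ(f)) ∩ X; (b) g lies in the σ(X, X_n^∼)-closure of the option space O_f = span{1, (f−k)⁺ : k ∈ ℝ}; (c) there exists a sequence (g_n) in O_f with g_n → g almost everywhere. -/

import Mathlib

open MeasureTheory Filter

universe u

variable {Ω : Type u}

/-- An ideal (solid subspace) of `L⁰`. -/
def IsIdealL0 {m0 : MeasurableSpace Ω} {μ : Measure Ω} (X : Submodule ℝ (Ω →ₘ[μ] ℝ)) : Prop :=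
  ∀ x y : Ω →ₘ[μ] ℝ, |x| ≤ |y| → y ∈ X → x ∈ X

/-- Order convergence of a net `y` to `x` within the subspace `X` of `L⁰`: there is a net
`z` in `X`, antitone, with infimum `0` relative to `X`, eventually dominating `|y a - x|`. -/
def OrderConvNetIn {m0 : MeasurableSpace Ω} {μ : Measure Ω} (X : Submodule ℝ (Ω →ₘ[μ] ℝ))
    {ι : Type*} [Preorder ι] (y : ι → (Ω →ₘ[μ] ℝ)) (x : Ω →ₘ[μ] ℝ) : Prop :=
  ∃ z : ι → (Ω →ₘ[μ] ℝ), (∀ a, z a ∈ X) ∧ Antitone z ∧ (∀ a, 0 ≤ z a) ∧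
    (∀ h ∈ X, (∀ a, h ≤ z a) → h ≤ 0) ∧ ∀ᶠ a in atTop, |y a - x| ≤ z a

/-- A subset `Y` of `X ⊆ L⁰` is order closed in `X` if it contains the limit of any net of
its elements order-converging (within `X`) to an element of `X`. -/
def OrderClosedIn {m0 : MeasurableSpace Ω} {μ : Measure Ω} (X : Submodule ℝ (Ω →ₘ[μ] ℝ))
    (Y : Set (Ω →ₘ[μ] ℝ)) : Prop :=
  ∀ (ι : Type u) (_ : Preorder ι) (_ : IsDirected ι (· ≤ ·)) (_ : Nonempty ι)
    (y : ι → (Ω →ₘ[μ] ℝ)) (x : Ω →ₘ[μ] ℝ),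
    (∀ a, y a ∈ Y) → x ∈ X → OrderConvNetIn X y x → x ∈ Y

/-- A functional on the subspace `X` of `L⁰` is order continuous if it carries nets
order-converging to `0` (within `X`) to nets converging to `0` in `ℝ`. -/
def OrderContinuousOn {m0 : MeasurableSpace Ω} {μ : Measure Ω}
    (X : Submodule ℝ (Ω →ₘ[μ] ℝ)) (φ : ↥X → ℝ) : Prop :=
  ∀ (ι : Type u) (_ : Preorder ι) (_ : IsDirected ι (· ≤ ·)) (_ : Nonempty ι)
    (y : ι → ↥X), OrderConvNetIn X (fun a => (y a : Ω →ₘ[μ] ℝ)) 0 →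
      Tendsto (fun a => φ (y a)) atTop (nhds 0)

/-- A functional on `X` is strictly positive if `φ(x) > 0` whenever `x > 0`. -/
def StrictlyPositiveOn {m0 : MeasurableSpace Ω} {μ : Measure Ω}
    (X : Submodule ℝ (Ω →ₘ[μ] ℝ)) (φ : ↥X → ℝ) : Prop :=
  ∀ x : ↥X, 0 < (x : Ω →ₘ[μ] ℝ) → 0 < φ x

/-- The weak topology `σ(X, Xₙ~)` induced on `X` by its order continuous dual. -/
noncomputable def weakOCTopology {m0 : MeasurableSpace Ω} {μ : Measure Ω}
    (X : Submodule ℝ (Ω →ₘ[μ] ℝ)) : TopologicalSpace ↥X :=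
  ⨅ φ ∈ {φ : ↥X →ₗ[ℝ] ℝ | OrderContinuousOn X ⇑φ},
    TopologicalSpace.induced ⇑φ inferInstance

/-- The option space `O_f = span{1, (f-k)⁺ : k ∈ ℝ}` of a claim `f ∈ L⁰`. -/
def optionSpace {m0 : MeasurableSpace Ω} {μ : Measure Ω} (f : Ω →ₘ[μ] ℝ) :
    Submodule ℝ (Ω →ₘ[μ] ℝ) :=
  Submodule.span ℝ ({1} ∪ {g | ∃ k : ℝ, g = (f - k • (1 : Ω →ₘ[μ] ℝ)) ⊔ 0})


/-- Closedness under `X`-dominated a.e. convergence of sequences. -/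
def DomClosed {m0 : MeasurableSpace Ω} {μ : Measure Ω}
    (X V : Submodule ℝ (Ω →ₘ[μ] ℝ)) : Prop :=
  ∀ (y : ℕ → (Ω →ₘ[μ] ℝ)) (x w : Ω →ₘ[μ] ℝ), w ∈ X → (∀ n, y n ∈ V) →
    (∀ n, ∀ᵐ ω ∂μ, |y n ω| ≤ w ω) →
    (∀ᵐ ω ∂μ, Tendsto (fun n => y n ω) atTop (nhds (x ω))) → x ∈ V

/-- The class of the indicator function of a set. -/
noncomputable def indL0 {m0 : MeasurableSpace Ω} (μ : Measure Ω) (B : Set Ω)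
    (hB : MeasurableSet B) : Ω →ₘ[μ] ℝ :=
  AEEqFun.mk (B.indicator (fun _ => (1 : ℝ))) (measurable_const.indicator hB).aestronglyMeasurable

lemma coeFn_indL0 {m0 : MeasurableSpace Ω} (μ : Measure Ω) (B : Set Ω) (hB : MeasurableSet B) :
    ⇑(indL0 μ B hB) =ᵐ[μ] B.indicator (fun _ => (1 : ℝ)) :=
  AEEqFun.coeFn_mk _ _

lemma ideal_mem_of_ae {m0 : MeasurableSpace Ω} {μ : Measure Ω}
    {X : Submodule ℝ (Ω →ₘ[μ] ℝ)} (hX : IsIdealL0 X) {x w : Ω →ₘ[μ] ℝ} (hw : w ∈ X)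
    (h : ∀ᵐ ω ∂μ, |x ω| ≤ |w ω|) : x ∈ X := by
  refine hX x w ?_ hw
  rw [← AEEqFun.coeFn_le]
  filter_upwards [h, AEEqFun.coeFn_abs x, AEEqFun.coeFn_abs w] with ω h1 h2 h3
  rw [h2, h3]; exact h1

lemma one_mem_of_const {m0 : MeasurableSpace Ω} {μ : Measure Ω}
    {X : Submodule ℝ (Ω →ₘ[μ] ℝ)}
    (hconst : ∀ c : ℝ, AEEqFun.const Ω (β := ℝ) c ∈ X) : (1 : Ω →ₘ[μ] ℝ) ∈ X := hconst 1

lemma indL0_mem {m0 : MeasurableSpace Ω} {μ : Measure Ω}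
    {X : Submodule ℝ (Ω →ₘ[μ] ℝ)} (hX : IsIdealL0 X)
    (hconst : ∀ c : ℝ, AEEqFun.const Ω (β := ℝ) c ∈ X) (B : Set Ω) (hB : MeasurableSet B) :
    indL0 μ B hB ∈ X := by
  refine ideal_mem_of_ae hX (one_mem_of_const hconst) ?_
  filter_upwards [coeFn_indL0 μ B hB, AEEqFun.coeFn_one (α := Ω) (β := ℝ) (μ := μ)] with ω h1 h2
  rw [h1, h2]
  by_cases h : ω ∈ B <;> simp [h]

/-- indicator of a simple function decomposition -/
lemma simple_mem {m m0 : MeasurableSpace Ω} {μ : Measure Ω} (hm : m ≤ m0)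
    (V : Submodule ℝ (Ω →ₘ[μ] ℝ))
    (hV : ∀ (B : Set Ω) (hB : MeasurableSet[m] B), indL0 μ B (hm B hB) ∈ V)
    (s : @SimpleFunc Ω m ℝ) (x : Ω →ₘ[μ] ℝ) (hx : ⇑x =ᵐ[μ] s) : x ∈ V := by
  revert x
  induction s using SimpleFunc.induction with
  | @const c B hB =>
    intro x hx
    have : x = c • indL0 μ B (hm B hB) := by
      apply AEEqFun.ext
      filter_upwards [hx, coeFn_indL0 μ B (hm B hB), AEEqFun.coeFn_smul c (indL0 μ B (hm B hB))]
        with ω h1 h2 h3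
      rw [h1, h3, Pi.smul_apply, h2]
      by_cases h : ω ∈ B <;> simp [h]
    rw [this]
    exact V.smul_mem _ (hV B hB)
  | @add s t _ hs ht =>
    intro x hx
    have h1 := ((@SimpleFunc.measurable _ _ m _ s).mono hm le_rfl).aestronglyMeasurable (μ := μ)
    have h2 := ((@SimpleFunc.measurable _ _ m _ t).mono hm le_rfl).aestronglyMeasurable (μ := μ)
    have : x = AEEqFun.mk s h1 + AEEqFun.mk t h2 := by
      apply AEEqFun.ext
      filter_upwards [hx, AEEqFun.coeFn_mk _ h1, AEEqFun.coeFn_mk _ h2,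
        AEEqFun.coeFn_add (AEEqFun.mk s h1) (AEEqFun.mk t h2)] with ω a b c d
      rw [a, d, Pi.add_apply, b, c]; rfl
    rw [this]
    exact V.add_mem (hs _ (AEEqFun.coeFn_mk _ h1)) (ht _ (AEEqFun.coeFn_mk _ h2))

lemma exists_simple_approx {m : MeasurableSpace Ω} (h : Ω → ℝ) (hh : Measurable h) :
    ∃ s : ℕ → SimpleFunc Ω ℝ, (∀ n ω, |s n ω| ≤ 2 * |h ω|) ∧
      ∀ ω, Tendsto (fun n => s n ω) atTop (nhds (h ω)) := by
  refine ⟨fun n => SimpleFunc.approxOn h hh Set.univ 0 (Set.mem_univ _) n, ?_, ?_⟩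
  · intro n ω
    have := SimpleFunc.norm_approxOn_zero_le hh (Set.mem_univ (0 : ℝ)) ω n
    simp only [Real.norm_eq_abs] at this
    linarith
  · intro ω
    exact SimpleFunc.tendsto_approxOn hh _ (by simp)

lemma meas_mem {m m0 : MeasurableSpace Ω} {μ : Measure Ω} (hm : m ≤ m0)
    (X V : Submodule ℝ (Ω →ₘ[μ] ℝ)) (hX : IsIdealL0 X) (hD : DomClosed X V)
    (hV : ∀ (B : Set Ω) (hB : MeasurableSet[m] B), indL0 μ B (hm B hB) ∈ V)
    (g : Ω →ₘ[μ] ℝ) (hg : g ∈ X) (g' : Ω → ℝ) (hg' : Measurable[m] g') (hgg : ⇑g =ᵐ[μ] g') :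
    g ∈ V := by
  obtain ⟨s, hs1, hs2⟩ := @exists_simple_approx Ω m g' hg'
  have hsm : ∀ n, AEStronglyMeasurable (s n) μ := fun n =>
    ((@SimpleFunc.measurable _ _ m _ (s n)).mono hm le_rfl).aestronglyMeasurable
  have habs : |g| ∈ X := by
    refine ideal_mem_of_ae hX hg ?_
    filter_upwards [AEEqFun.coeFn_abs g] with ω h
    rw [h]; simp
  refine hD (fun n => AEEqFun.mk (s n) (hsm n)) g ((2 : ℝ) • |g|) (X.smul_mem _ habs) ?_ ?_ ?_
  · intro n
    exact simple_mem hm V hV (s n) _ (AEEqFun.coeFn_mk _ _)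
  · intro n
    filter_upwards [AEEqFun.coeFn_mk _ (hsm n), AEEqFun.coeFn_smul (2 : ℝ) |g|,
      AEEqFun.coeFn_abs g, hgg] with ω h1 h2 h3 h4
    rw [h1, h2, Pi.smul_apply, h3, h4, smul_eq_mul]
    exact hs1 n ω
  · have : ∀ᵐ ω ∂μ, ∀ n, AEEqFun.mk (s n) (hsm n) ω = s n ω :=
      ae_all_iff.2 fun n => AEEqFun.coeFn_mk _ (hsm n)
    filter_upwards [this, hgg] with ω h1 h2
    simp_rw [h1, h2]
    exact hs2 ω

lemma coeFn_sub_one {m0 : MeasurableSpace Ω} {μ : Measure Ω} (f : Ω →ₘ[μ] ℝ) (k : ℝ) :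
    ⇑((f - k • (1 : Ω →ₘ[μ] ℝ)) ⊔ 0) =ᵐ[μ] fun ω => max (f ω - k) 0 := by
  filter_upwards [AEEqFun.coeFn_sup (f - k • (1 : Ω →ₘ[μ] ℝ)) 0,
    AEEqFun.coeFn_sub f (k • (1 : Ω →ₘ[μ] ℝ)), AEEqFun.coeFn_smul k (1 : Ω →ₘ[μ] ℝ),
    AEEqFun.coeFn_one (α := Ω) (β := ℝ) (μ := μ),
    AEEqFun.coeFn_zero (α := Ω) (β := ℝ) (μ := μ)] with ω h1 h2 h3 h4 h5
  rw [h1, h2, Pi.sub_apply, h3, Pi.smul_apply, h4, h5]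
  simp

lemma call_spread_bound (t k N : ℝ) (hN : 0 < N) :
    |N * (max (t - k) 0 - max (t - (k + 1 / N)) 0)| ≤ 1 := by
  have h1 : 0 < 1 / N := by positivity
  have h2 : N * (1 / N) = 1 := by field_simp
  rw [abs_le]
  rcases le_total (t - k) 0 with a | a <;> rcases le_total (t - (k + 1 / N)) 0 with b | b <;>
    simp only [a, b, max_eq_left, max_eq_right] <;> constructor <;> nlinarith

lemma call_spread_tendsto (t k : ℝ) :
    Tendsto (fun n : ℕ => ((n : ℝ) + 1) * (max (t - k) 0 - max (t - (k + 1 / ((n : ℝ) + 1))) 0))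
      atTop (nhds ((Set.Ioi k).indicator (fun _ => (1 : ℝ)) t)) := by
  by_cases h : k < t
  · have h0 : Tendsto (fun n : ℕ => 1 / ((n : ℝ) + 1)) atTop (nhds 0) :=
      tendsto_one_div_add_atTop_nhds_zero_nat
    have h1 : ∀ᶠ n : ℕ in atTop, 1 / ((n : ℝ) + 1) < t - k := h0.eventually (gt_mem_nhds (by linarith))
    refine tendsto_nhds_of_eventually_eq ?_
    filter_upwards [h1] with n hn
    rw [Set.indicator_of_mem (by exact h), max_eq_left (by linarith), max_eq_left (by linarith)]
    have : (n : ℝ) + 1 ≠ 0 := by positivity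
    field_simp
    ring
  · refine tendsto_nhds_of_eventually_eq ?_
    filter_upwards with n
    have : 0 < 1 / ((n : ℝ) + 1) := by positivity
    push Not at h
    rw [Set.indicator_of_notMem (by simpa using h), max_eq_right (by linarith),
      max_eq_right (by linarith)]
    simp

lemma comap_le {m0 : MeasurableSpace Ω} {μ : Measure Ω} (f : Ω →ₘ[μ] ℝ) :
    MeasurableSpace.comap (⇑f) (inferInstance : MeasurableSpace ℝ) ≤ m0 :=
  f.measurable.comap_le

lemma ind_mem_of_option {m0 : MeasurableSpace Ω} {μ : Measure Ω}
    (X V : Submodule ℝ (Ω →ₘ[μ] ℝ)) (hD : DomClosed X V)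
    (hconst : ∀ c : ℝ, AEEqFun.const Ω (β := ℝ) c ∈ X) (f : Ω →ₘ[μ] ℝ)
    (hO : optionSpace f ≤ V) (A : Set ℝ) (hA : MeasurableSet A) :
    indL0 μ (f ⁻¹' A) (f.measurable hA) ∈ V := by
  have h1X := one_mem_of_const hconst
  have h1V : (1 : Ω →ₘ[μ] ℝ) ∈ V := hO (Submodule.subset_span (Or.inl rfl))
  have hone := AEEqFun.coeFn_one (α := Ω) (β := ℝ) (μ := μ)
  induction A, hA using MeasurableSpace.induction_on_inter
    ((BorelSpace.measurable_eq (α := ℝ)).trans (borel_eq_generateFrom_Ioi ℝ)) isPiSystem_Ioi with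
  | empty =>
    convert V.zero_mem
    apply AEEqFun.ext
    filter_upwards [coeFn_indL0 μ (f ⁻¹' ∅) (f.measurable MeasurableSet.empty),
      AEEqFun.coeFn_zero (α := Ω) (β := ℝ) (μ := μ)] with ω h1 h2
    rw [h1, h2]; simp
  | basic t ht =>
    obtain ⟨k, rfl⟩ := ht
    let c : ℝ → (Ω →ₘ[μ] ℝ) := fun k => (f - k • (1 : Ω →ₘ[μ] ℝ)) ⊔ 0
    have hc : ∀ k, c k ∈ V := fun k => hO (Submodule.subset_span (Or.inr ⟨k, rfl⟩))
    let y : ℕ → (Ω →ₘ[μ] ℝ) := fun n => ((n : ℝ) + 1) • (c k - c (k + 1 / ((n : ℝ) + 1)))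
    have hy : ∀ n, ∀ᵐ ω ∂μ, y n ω =
        ((n : ℝ) + 1) * (max (f ω - k) 0 - max (f ω - (k + 1 / ((n : ℝ) + 1))) 0) := by
      intro n
      filter_upwards [AEEqFun.coeFn_smul ((n : ℝ) + 1) (c k - c (k + 1 / ((n : ℝ) + 1))),
        AEEqFun.coeFn_sub (c k) (c (k + 1 / ((n : ℝ) + 1))), coeFn_sub_one f k,
        coeFn_sub_one f (k + 1 / ((n : ℝ) + 1))] with ω h1 h2 h3 h4
      rw [h1, Pi.smul_apply, h2, Pi.sub_apply, h3, h4, smul_eq_mul]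
    refine hD y _ 1 h1X (fun n => V.smul_mem _ (V.sub_mem (hc _) (hc _))) ?_ ?_
    · intro n
      filter_upwards [hy n, hone] with ω h1 h2
      rw [h1, h2]
      exact call_spread_bound _ _ _ (by positivity)
    · filter_upwards [ae_all_iff.2 hy, coeFn_indL0 μ (f ⁻¹' Set.Ioi k) (f.measurable measurableSet_Ioi)]
        with ω h1 h2
      simp_rw [h1, h2]
      exact call_spread_tendsto (f ω) k
  | compl t ht ih =>
    convert V.sub_mem h1V ih
    apply AEEqFun.ext
    filter_upwards [hone, coeFn_indL0 μ (f ⁻¹' t) (f.measurable ht),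
      coeFn_indL0 μ (f ⁻¹' tᶜ) (f.measurable ht.compl),
      AEEqFun.coeFn_sub 1 (indL0 μ (f ⁻¹' t) (f.measurable ht))] with ω h1 h2 h3 h4
    rw [h3, h4, Pi.sub_apply, h1, h2]
    by_cases h : f ω ∈ t <;> simp [h]
  | iUnion t hd ht ih =>
    let y : ℕ → (Ω →ₘ[μ] ℝ) := fun n =>
      indL0 μ (⋃ i ∈ Finset.range n, f ⁻¹' (t i))
        (Finset.measurableSet_biUnion _ fun i _ => f.measurable (ht i))
    have hy0 : ∀ n, ∀ᵐ ω ∂μ, y n ω =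
        (⋃ i ∈ Finset.range n, f ⁻¹' (t i)).indicator (fun _ => (1 : ℝ)) ω :=
      fun n => coeFn_indL0 μ _ _
    have hyV : ∀ n, y n ∈ V := by
      intro n
      induction n with
      | zero =>
        convert V.zero_mem
        apply AEEqFun.ext
        filter_upwards [hy0 0, AEEqFun.coeFn_zero (α := Ω) (β := ℝ) (μ := μ)] with ω h1 h2
        rw [h1, h2]; simp
      | succ n ihn =>
        convert V.add_mem ihn (ih n)
        apply AEEqFun.ext
        filter_upwards [hy0 n, hy0 (n + 1), coeFn_indL0 μ (f ⁻¹' t n) (f.measurable (ht n)),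
          AEEqFun.coeFn_add (y n) (indL0 μ (f ⁻¹' t n) (f.measurable (ht n)))] with ω h1 h2 h3 h4
        rw [h2, h4, Pi.add_apply, h1, h3]
        rw [← Set.indicator_union_of_notMem_inter]
        · congr 1
          rw [Finset.range_add_one, Finset.set_biUnion_insert, Set.union_comm]
        · rintro ⟨ha, hb⟩
          simp only [Set.mem_iUnion, Finset.mem_range, exists_prop] at ha
          obtain ⟨i, hi, hi2⟩ := ha
          exact Set.disjoint_left.1 (hd hi.ne) hi2 hb
    refine hD y _ 1 h1X hyV ?_ ?_
    · intro n
      filter_upwards [hy0 n, hone] with ω h1 h2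
      rw [h1, h2]
      by_cases h : ω ∈ (⋃ i ∈ Finset.range n, f ⁻¹' (t i)) <;> simp only [h, Set.indicator_of_mem, Set.indicator_of_notMem, not_false_eq_true, Pi.one_apply] <;> simp
    · filter_upwards [ae_all_iff.2 hy0, coeFn_indL0 μ (f ⁻¹' ⋃ i, t i) (f.measurable (.iUnion ht))]
        with ω h1 h2
      simp_rw [h1, h2]
      by_cases h : ∃ i, f ω ∈ t i
      · obtain ⟨i, hi⟩ := h
        refine tendsto_nhds_of_eventually_eq ?_
        filter_upwards [eventually_gt_atTop i] with n hn
        rw [Set.indicator_of_mem, Set.indicator_of_mem]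
        · exact Set.mem_iUnion.2 ⟨i, hi⟩
        · simp only [Set.mem_iUnion, Finset.mem_range, exists_prop]
          exact ⟨i, hn, hi⟩
      · refine tendsto_nhds_of_eventually_eq ?_
        filter_upwards with n
        rw [Set.indicator_of_notMem, Set.indicator_of_notMem]
        · intro h'; exact h (by simpa using h')
        · simp only [Set.mem_iUnion, Finset.mem_range, exists_prop]
          rintro ⟨i, _, hi⟩
          exact h ⟨i, hi⟩

/-- Key density lemma. -/
lemma density {m0 : MeasurableSpace Ω} {μ : Measure Ω}
    (X V : Submodule ℝ (Ω →ₘ[μ] ℝ)) (hX : IsIdealL0 X) (hD : DomClosed X V)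
    (hconst : ∀ c : ℝ, AEEqFun.const Ω (β := ℝ) c ∈ X) (f : Ω →ₘ[μ] ℝ)
    (hO : optionSpace f ≤ V) (g : Ω →ₘ[μ] ℝ) (hg : g ∈ X)
    (h : ∃ g' : Ω → ℝ, Measurable[MeasurableSpace.comap (⇑f)
          (inferInstance : MeasurableSpace ℝ)] g' ∧ ⇑g =ᵐ[μ] g') : g ∈ V := by
  obtain ⟨g', hg', hgg⟩ := h
  refine meas_mem (comap_le f) X V hX hD ?_ g hg g' hg' hgg
  rintro B ⟨A, hA, rfl⟩
  exact ind_mem_of_option X V hD hconst f hO A hA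

lemma tail_sup_facts (a : ℕ → ℝ) (w : ℝ) (hb : ∀ n, |a n| ≤ w)
    (ht : Tendsto a atTop (nhds 0)) :
    (∀ n, |a n| ≤ ⨆ k, |a (n + k)|) ∧ (∀ n, (⨆ k, |a (n + k)|) ≤ w) ∧
    (∀ n n', n ≤ n' → (⨆ k, |a (n' + k)|) ≤ ⨆ k, |a (n + k)|) ∧
    Tendsto (fun n => ⨆ k, |a (n + k)|) atTop (nhds 0) := by
  have hbd : ∀ n, BddAbove (Set.range fun k => |a (n + k)|) := by
    intro n
    refine ⟨w, ?_⟩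
    rintro _ ⟨k, rfl⟩
    exact hb _
  have h1 : ∀ n, |a n| ≤ ⨆ k, |a (n + k)| := fun n => le_ciSup (hbd n) 0
  refine ⟨h1, fun n => ciSup_le fun k => hb _, ?_, ?_⟩
  · intro n n' h
    refine ciSup_le fun k => ?_
    have := le_ciSup (hbd n) (n' - n + k)
    rwa [show n + (n' - n + k) = n' + k by omega] at this
  · rw [Metric.tendsto_atTop] at ht ⊢
    intro ε hε
    obtain ⟨N, hN⟩ := ht (ε / 2) (by positivity)
    refine ⟨N, fun n hn => ?_⟩
    have h0 : 0 ≤ ⨆ k, |a (n + k)| := (abs_nonneg _).trans (h1 n)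
    rw [Real.dist_eq, sub_zero, abs_of_nonneg h0]
    refine lt_of_le_of_lt (ciSup_le fun k => ?_) (half_lt_self hε)
    have := hN (n + k) (by omega)
    rw [Real.dist_eq, sub_zero] at this
    exact this.le

lemma oc_dominated {m0 : MeasurableSpace Ω} {μ : Measure Ω}
    {X : Submodule ℝ (Ω →ₘ[μ] ℝ)} (hX : IsIdealL0 X) {ψ : ↥X → ℝ}
    (hψ : OrderContinuousOn X ψ) (y : ℕ → ↥X) (w : Ω →ₘ[μ] ℝ) (hw : w ∈ X)
    (hb : ∀ n, ∀ᵐ ω ∂μ, |(y n : Ω →ₘ[μ] ℝ) ω| ≤ w ω)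
    (ht : ∀ᵐ ω ∂μ, Tendsto (fun n => (y n : Ω →ₘ[μ] ℝ) ω) atTop (nhds 0)) :
    Tendsto (fun n => ψ (y n)) atTop (nhds 0) := by
  have hzm : ∀ n : ℕ, Measurable fun ω => ⨆ k, |(y (n + k) : Ω →ₘ[μ] ℝ) ω| := fun n =>
    Measurable.iSup fun k => continuous_abs.measurable.comp (AEEqFun.measurable _)
  let z : ℕ → (Ω →ₘ[μ] ℝ) := fun n => AEEqFun.mk _ (hzm n).aestronglyMeasurable
  have hz : ∀ᵐ ω ∂μ, ∀ n, z n ω = ⨆ k, |(y (n + k) : Ω →ₘ[μ] ℝ) ω| :=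
    ae_all_iff.2 fun n => AEEqFun.coeFn_mk _ _
  have hb' := ae_all_iff.2 hb
  have hconv : OrderConvNetIn X (fun a : ULift.{u} ℕ => (y a.down : Ω →ₘ[μ] ℝ)) 0 := by
    refine ⟨fun a => z a.down, ?_, ?_, ?_, ?_, ?_⟩
    · intro a
      refine ideal_mem_of_ae hX hw ?_
      filter_upwards [hz, hb', ht] with ω h1 h2 h3
      obtain ⟨f1, f2, f3, f4⟩ := tail_sup_facts _ _ h2 h3
      rw [h1, abs_of_nonneg ((abs_nonneg _).trans (f1 _))]
      exact (f2 _).trans (le_abs_self _)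
    · intro a b hab
      change z b.down ≤ z a.down
      rw [← AEEqFun.coeFn_le]
      filter_upwards [hz, hb', ht] with ω h1 h2 h3
      obtain ⟨f1, f2, f3, f4⟩ := tail_sup_facts _ _ h2 h3
      rw [h1, h1]
      exact f3 _ _ hab
    · intro a
      rw [← AEEqFun.coeFn_le]
      filter_upwards [hz, hb', ht, AEEqFun.coeFn_zero (α := Ω) (β := ℝ) (μ := μ)] with ω h1 h2 h3 h4
      obtain ⟨f1, f2, f3, f4⟩ := tail_sup_facts _ _ h2 h3
      rw [h1, h4]
      exact (abs_nonneg _).trans (f1 _)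
    · intro h _ hle
      rw [← AEEqFun.coeFn_le]
      have hle' : ∀ᵐ ω ∂μ, ∀ n, h ω ≤ z n ω :=
        ae_all_iff.2 fun n => AEEqFun.coeFn_le.2 (hle ⟨n⟩)
      filter_upwards [hz, hb', ht, AEEqFun.coeFn_zero (α := Ω) (β := ℝ) (μ := μ), hle']
        with ω h1 h2 h3 h4 h5
      obtain ⟨f1, f2, f3, f4⟩ := tail_sup_facts _ _ h2 h3
      rw [h4]
      refine ge_of_tendsto' f4 fun n => ?_
      rw [← h1]; exact h5 n
    · filter_upwards with a
      rw [← AEEqFun.coeFn_le, sub_zero]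
      filter_upwards [hz, hb', ht, AEEqFun.coeFn_abs (y a.down : Ω →ₘ[μ] ℝ)] with ω h1 h2 h3 h4
      obtain ⟨f1, f2, f3, f4⟩ := tail_sup_facts _ _ h2 h3
      rw [h1, h4]
      exact f1 _
  have := hψ (ULift.{u} ℕ) inferInstance inferInstance inferInstance (fun a => y a.down) hconv
  have hup : Tendsto (fun n : ℕ => (ULift.up n : ULift.{u} ℕ)) atTop atTop :=
    tendsto_atTop_atTop.2 fun b => ⟨b.down, fun a ha => ha⟩
  exact this.comp hup

/-- Version with a nonzero limit. -/
lemma oc_dominated' {m0 : MeasurableSpace Ω} {μ : Measure Ω}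
    {X : Submodule ℝ (Ω →ₘ[μ] ℝ)} (hX : IsIdealL0 X) {ψ : ↥X →ₗ[ℝ] ℝ}
    (hψ : OrderContinuousOn X ψ) (y : ℕ → ↥X) (x : ↥X) (w : Ω →ₘ[μ] ℝ) (hw : w ∈ X)
    (hb : ∀ n, ∀ᵐ ω ∂μ, |(y n : Ω →ₘ[μ] ℝ) ω| ≤ w ω)
    (ht : ∀ᵐ ω ∂μ, Tendsto (fun n => (y n : Ω →ₘ[μ] ℝ) ω) atTop
      (nhds ((x : Ω →ₘ[μ] ℝ) ω))) :
    Tendsto (fun n => ψ (y n)) atTop (nhds (ψ x)) := by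
  have hsub : ∀ᵐ ω ∂μ, ∀ n, ((y n - x : ↥X) : Ω →ₘ[μ] ℝ) ω =
      (y n : Ω →ₘ[μ] ℝ) ω - (x : Ω →ₘ[μ] ℝ) ω :=
    ae_all_iff.2 fun n => AEEqFun.coeFn_sub (y n : Ω →ₘ[μ] ℝ) x
  have habs : |(x : Ω →ₘ[μ] ℝ)| ∈ X := by
    refine ideal_mem_of_ae hX x.2 ?_
    filter_upwards [AEEqFun.coeFn_abs (x : Ω →ₘ[μ] ℝ)] with ω h
    rw [h]; simp
  have := oc_dominated hX hψ (fun n => y n - x) (w + |(x : Ω →ₘ[μ] ℝ)|) (X.add_mem hw habs) ?_ ?_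
  · simp only [map_sub] at this
    simpa using this.add_const (ψ x)
  · intro n
    filter_upwards [hsub, hb n, AEEqFun.coeFn_add w |(x : Ω →ₘ[μ] ℝ)|,
      AEEqFun.coeFn_abs (x : Ω →ₘ[μ] ℝ)] with ω h1 h2 h3 h4
    rw [h1, h3, Pi.add_apply, h4]
    exact (abs_sub _ _).trans (by gcongr)
  · filter_upwards [hsub, ht] with ω h1 h2
    simp_rw [h1]
    simpa using h2.sub_const ((x : Ω →ₘ[μ] ℝ) ω)

lemma limit_mem {m0 : MeasurableSpace Ω} {μ : Measure Ω}
    {X : Submodule ℝ (Ω →ₘ[μ] ℝ)} (hX : IsIdealL0 X)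
    (y : ℕ → (Ω →ₘ[μ] ℝ)) (x w : Ω →ₘ[μ] ℝ) (hw : w ∈ X)
    (hb : ∀ n, ∀ᵐ ω ∂μ, |y n ω| ≤ w ω)
    (ht : ∀ᵐ ω ∂μ, Tendsto (fun n => y n ω) atTop (nhds (x ω))) : x ∈ X := by
  refine ideal_mem_of_ae hX hw ?_
  filter_upwards [ae_all_iff.2 hb, ht] with ω h1 h2
  exact (le_of_tendsto' h2.abs h1).trans (le_abs_self _)

lemma ker_domClosed {m0 : MeasurableSpace Ω} {μ : Measure Ω}
    {X : Submodule ℝ (Ω →ₘ[μ] ℝ)} (hX : IsIdealL0 X) {ψ : ↥X →ₗ[ℝ] ℝ}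
    (hψ : OrderContinuousOn X ψ) : DomClosed X ((LinearMap.ker ψ).map X.subtype) := by
  intro y x w hw hy hb ht
  have hx := limit_mem hX y x w hw hb ht
  choose y' hy' hyy using hy
  have h := oc_dominated' hX hψ y' ⟨x, hx⟩ w hw ?_ ?_
  · refine ⟨⟨x, hx⟩, ?_, rfl⟩
    have h0 : ∀ n, ψ (y' n) = 0 := fun n => hy' n
    simp_rw [h0] at h
    exact (tendsto_nhds_unique h tendsto_const_nhds)
  · intro n
    have := hb n
    rw [← hyy n] at this
    exact this
  · simp_rw [← hyy] at ht
    exact ht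

lemma mem_weak_closure_iff {m0 : MeasurableSpace Ω} {μ : Measure Ω}
    (X : Submodule ℝ (Ω →ₘ[μ] ℝ)) (O : Submodule ℝ ↥X) (g : ↥X) :
    g ∈ @closure _ (weakOCTopology X) (O : Set ↥X) ↔
      ∀ ψ : ↥X →ₗ[ℝ] ℝ, OrderContinuousOn X ψ → (∀ y ∈ O, ψ y = 0) → ψ g = 0 := by
  let I := {φ : ↥X →ₗ[ℝ] ℝ // OrderContinuousOn X φ}
  let E : ↥X → (I → ℝ) := fun x i => i.1 x
  have hE : weakOCTopology X = TopologicalSpace.induced E inferInstance := by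
    unfold weakOCTopology
    rw [Pi.topologicalSpace, induced_iInf, iInf_subtype']
    refine iInf_congr fun i => ?_
    rw [induced_compose]
    rfl
  rw [hE, closure_induced]
  constructor
  · intro h ψ hψ h0
    have hc : IsClosed {p : I → ℝ | p ⟨ψ, hψ⟩ = 0} :=
      isClosed_eq (continuous_apply _) continuous_const
    have : closure (E '' (O : Set ↥X)) ⊆ {p : I → ℝ | p ⟨ψ, hψ⟩ = 0} := by
      refine closure_minimal ?_ hc
      rintro _ ⟨y, hy, rfl⟩
      exact h0 y hy
    exact this h
  · intro h
    rw [mem_closure_iff]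
    intro U hU hgU
    obtain ⟨s, u, hu, hsu⟩ := isOpen_pi_iff.1 hU _ hgU
    let T : ↥X →ₗ[ℝ] (s → ℝ) := LinearMap.pi fun i => i.1.1
    have hT : T g ∈ O.map T := by
      by_contra hn
      obtain ⟨l, hl, hle⟩ := Submodule.exists_le_ker_of_notMem hn
      apply hl
      refine h (l ∘ₗ T) ?_ ?_
      · intro ι _ _ _ y hy
        have hTy : Tendsto (fun a => T (y a)) atTop (nhds 0) := by
          rw [tendsto_pi_nhds]
          intro i
          exact i.1.2 ι _ inferInstance inferInstance y hy
        have hlc : Continuous l := LinearMap.continuous_of_finiteDimensional l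
        have := (hlc.tendsto 0).comp hTy
        simpa [Function.comp_def] using this
      · intro y hy
        exact hle (Submodule.mem_map_of_mem hy)
    obtain ⟨y, hy, hyT⟩ := hT
    refine ⟨E y, hsu ?_, y, hy, rfl⟩
    intro i hi
    have : i.1 y = i.1 g := congrFun hyT ⟨i, hi⟩
    change i.1 y ∈ u i
    rw [this]
    exact (hu i hi).2

/-- Closure of a subspace of `L⁰` for convergence in measure. -/
def measClosure {m0 : MeasurableSpace Ω} {μ : Measure Ω} (O : Submodule ℝ (Ω →ₘ[μ] ℝ)) :
    Submodule ℝ (Ω →ₘ[μ] ℝ) where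
  carrier := {x | ∀ ε : ℝ, 0 < ε → ∃ y ∈ O, μ {ω | ε ≤ |y ω - x ω|} ≤ ENNReal.ofReal ε}
  zero_mem' := by
    intro ε hε
    refine ⟨0, O.zero_mem, ?_⟩
    simp [hε.not_ge]
  add_mem' := by
    intro a b ha hb ε hε
    obtain ⟨y, hy, hya⟩ := ha (ε / 2) (by positivity)
    obtain ⟨z, hz, hzb⟩ := hb (ε / 2) (by positivity)
    refine ⟨y + z, O.add_mem hy hz, ?_⟩
    have h1 : μ {ω | ε ≤ |(y + z) ω - (a + b) ω|} ≤
        μ ({ω | ε / 2 ≤ |y ω - a ω|} ∪ {ω | ε / 2 ≤ |z ω - b ω|}) := by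
      refine measure_mono_ae ?_
      filter_upwards [AEEqFun.coeFn_add y z, AEEqFun.coeFn_add a b] with ω h1 h2 h
      have h : ε ≤ |(y + z) ω - (a + b) ω| := h
      rw [h1, h2, Pi.add_apply, Pi.add_apply,
        show y ω + z ω - (a ω + b ω) = (y ω - a ω) + (z ω - b ω) by ring] at h
      have h3 := abs_add_le (y ω - a ω) (z ω - b ω)
      by_contra hn
      have hn : ¬ (ε / 2 ≤ |y ω - a ω| ∨ ε / 2 ≤ |z ω - b ω|) := hn
      push Not at hn
      linarith [hn.1, hn.2]
    refine h1.trans ((measure_union_le _ _).trans ((add_le_add hya hzb).trans ?_))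
    rw [← ENNReal.ofReal_add (by positivity) (by positivity), add_halves]
  smul_mem' := by
    intro c x hx ε hε
    have hc : 0 < |c| + 1 := by positivity
    obtain ⟨y, hy, hyx⟩ := hx (ε / (|c| + 1)) (by positivity)
    refine ⟨c • y, O.smul_mem c hy, ?_⟩
    refine le_trans (measure_mono_ae ?_) (hyx.trans (ENNReal.ofReal_le_ofReal
      (div_le_self hε.le (by linarith [abs_nonneg c]))))
    filter_upwards [AEEqFun.coeFn_smul c y, AEEqFun.coeFn_smul c x] with ω h1 h2 h
    have h : ε ≤ |(c • y) ω - (c • x) ω| := h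
    rw [h1, h2, Pi.smul_apply, Pi.smul_apply, ← smul_sub, smul_eq_mul, abs_mul] at h
    change ε / (|c| + 1) ≤ |y ω - x ω|
    rw [div_le_iff₀ hc]
    nlinarith [abs_nonneg (y ω - x ω)]

lemma le_measClosure {m0 : MeasurableSpace Ω} {μ : Measure Ω}
    (O : Submodule ℝ (Ω →ₘ[μ] ℝ)) : O ≤ measClosure O := by
  intro x hx ε hε
  refine ⟨x, hx, ?_⟩
  simp [hε.not_ge]

lemma measClosure_domClosed {m0 : MeasurableSpace Ω} {μ : Measure Ω} [IsFiniteMeasure μ]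
    (X O : Submodule ℝ (Ω →ₘ[μ] ℝ)) : DomClosed X (measClosure O) := by
  intro y x w _ hy _ ht ε hε
  have hm := tendstoInMeasure_of_tendsto_ae (fun n => (y n).aestronglyMeasurable) ht
  rw [tendstoInMeasure_iff_norm] at hm
  have h1 := (hm (ε / 2) (by positivity)).eventually
    (gt_mem_nhds (show 0 < ENNReal.ofReal (ε / 2) by simpa using hε))
  obtain ⟨n, hn⟩ := h1.exists
  obtain ⟨z, hz, hzn⟩ := hy n (ε / 2) (by positivity)
  refine ⟨z, hz, ?_⟩
  have h2 : μ {ω | ε ≤ |z ω - x ω|} ≤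
      μ ({ω | ε / 2 ≤ |z ω - y n ω|} ∪ {ω | ε / 2 ≤ ‖y n ω - x ω‖}) := by
    refine measure_mono fun ω h => ?_
    have h : ε ≤ |z ω - x ω| := h
    by_contra hn
    have hn : ¬ (ε / 2 ≤ |z ω - y n ω| ∨ ε / 2 ≤ |y n ω - x ω|) := hn
    push Not at hn
    have h3 := abs_sub_le (z ω) (y n ω) (x ω)
    linarith [hn.1, hn.2]
  refine h2.trans ((measure_union_le _ _).trans ((add_le_add hzn hn.le).trans ?_))
  rw [← ENNReal.ofReal_add (by positivity) (by positivity), add_halves]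

lemma exists_seq_of_measClosure {m0 : MeasurableSpace Ω} {μ : Measure Ω}
    (O : Submodule ℝ (Ω →ₘ[μ] ℝ)) (x : Ω →ₘ[μ] ℝ) (hx : x ∈ measClosure O) :
    ∃ y : ℕ → (Ω →ₘ[μ] ℝ), (∀ n, y n ∈ O) ∧
      ∀ᵐ ω ∂μ, Tendsto (fun n => y n ω) atTop (nhds (x ω)) := by
  choose y hy hyx using fun n : ℕ => hx (1 / ((n : ℝ) + 1)) (by positivity)
  have h0 : Tendsto (fun n : ℕ => 1 / ((n : ℝ) + 1)) atTop (nhds 0) :=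
    tendsto_one_div_add_atTop_nhds_zero_nat
  have hm : TendstoInMeasure μ (fun n => ⇑(y n)) atTop x := by
    rw [tendstoInMeasure_iff_norm]
    intro ε hε
    have h1 : Tendsto (fun n : ℕ => ENNReal.ofReal (1 / ((n : ℝ) + 1))) atTop (nhds 0) := by
      have := (ENNReal.continuous_ofReal.tendsto 0).comp h0
      simpa [Function.comp_def] using this
    refine tendsto_of_tendsto_of_tendsto_of_le_of_le' tendsto_const_nhds h1 (by simp) ?_
    filter_upwards [h0.eventually (gt_mem_nhds hε)] with n hn
    refine le_trans (measure_mono fun ω h => ?_) (hyx n)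
    exact hn.le.trans h
  obtain ⟨ns, _, hns⟩ := hm.exists_seq_tendsto_ae
  exact ⟨fun n => y (ns n), fun n => hy _, hns⟩

lemma pos_of_strict {m0 : MeasurableSpace Ω} {μ : Measure Ω}
    {X : Submodule ℝ (Ω →ₘ[μ] ℝ)} {φ : ↥X →ₗ[ℝ] ℝ} (hφ : StrictlyPositiveOn X φ)
    (x : ↥X) (hx : ∀ᵐ ω ∂μ, 0 ≤ (x : Ω →ₘ[μ] ℝ) ω) : 0 ≤ φ x := by
  have h0 : 0 ≤ (x : Ω →ₘ[μ] ℝ) := by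
    rw [← AEEqFun.coeFn_le]
    filter_upwards [hx, AEEqFun.coeFn_zero (α := Ω) (β := ℝ) (μ := μ)] with ω h1 h2
    rw [h2]; exact h1
  rcases h0.eq_or_lt with h | h
  · have : x = 0 := Subtype.ext h.symm
    rw [this, map_zero]
  · exact (hφ x h).le

lemma indL0_iUnion_hasSum {m0 : MeasurableSpace Ω} {μ : Measure Ω}
    {X : Submodule ℝ (Ω →ₘ[μ] ℝ)} (hX : IsIdealL0 X)
    (hconst : ∀ c : ℝ, AEEqFun.const Ω (β := ℝ) c ∈ X) {φ : ↥X →ₗ[ℝ] ℝ}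
    (hφ : OrderContinuousOn X φ) (t : ℕ → Set Ω) (ht : ∀ i, MeasurableSet (t i))
    (hd : Pairwise (Function.onFun Disjoint t)) :
    Tendsto (fun n => ∑ i ∈ Finset.range n, φ ⟨_, indL0_mem hX hconst (t i) (ht i)⟩) atTop
      (nhds (φ ⟨_, indL0_mem hX hconst (⋃ i, t i) (.iUnion ht)⟩)) := by
  have hone := AEEqFun.coeFn_one (α := Ω) (β := ℝ) (μ := μ)
  have hmeas : ∀ n, MeasurableSet (⋃ i ∈ Finset.range n, t i) := fun n =>
    Finset.measurableSet_biUnion _ fun i _ => ht i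
  let y : ℕ → ↥X := fun n => ⟨_, indL0_mem hX hconst (⋃ i ∈ Finset.range n, t i) (hmeas n)⟩
  have hy0 : ∀ n, ∀ᵐ ω ∂μ, (y n : Ω →ₘ[μ] ℝ) ω =
      (⋃ i ∈ Finset.range n, t i).indicator (fun _ => (1 : ℝ)) ω :=
    fun n => coeFn_indL0 μ _ (hmeas n)
  have hsum : ∀ n, ∑ i ∈ Finset.range n, φ ⟨_, indL0_mem hX hconst (t i) (ht i)⟩ = φ (y n) := by
    intro n
    induction n with
    | zero =>
      have : y 0 = 0 := by
        apply Subtype.ext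
        apply AEEqFun.ext
        filter_upwards [hy0 0, AEEqFun.coeFn_zero (α := Ω) (β := ℝ) (μ := μ)] with ω h1 h2
        rw [h1]
        refine Eq.trans ?_ h2.symm
        simp
      rw [this, map_zero]; simp
    | succ n ihn =>
      rw [Finset.sum_range_succ, ihn, ← map_add]
      congr 1
      apply Subtype.ext
      apply AEEqFun.ext
      filter_upwards [hy0 n, hy0 (n + 1), coeFn_indL0 μ (t n) (ht n),
        AEEqFun.coeFn_add (y n : Ω →ₘ[μ] ℝ) (indL0 μ (t n) (ht n))] with ω h1 h2 h3 h4
      rw [h2]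
      refine h4.trans ?_
      rw [Pi.add_apply, h1, h3]
      rw [← Set.indicator_union_of_notMem_inter]
      · congr 1
        rw [Finset.range_add_one, Finset.set_biUnion_insert, Set.union_comm]
      · rintro ⟨ha, hb⟩
        simp only [Set.mem_iUnion, Finset.mem_range, exists_prop] at ha
        obtain ⟨i, hi, hi2⟩ := ha
        exact Set.disjoint_left.1 (hd hi.ne) hi2 hb
  simp_rw [hsum]
  refine oc_dominated' hX hφ y _ 1 (one_mem_of_const hconst) ?_ ?_
  · intro n
    filter_upwards [hy0 n, hone] with ω h1 h2
    rw [h1, h2]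
    by_cases h : ω ∈ (⋃ i ∈ Finset.range n, t i) <;>
      simp only [h, Set.indicator_of_mem, Set.indicator_of_notMem, not_false_eq_true,
        Pi.one_apply] <;> simp
  · filter_upwards [ae_all_iff.2 hy0, coeFn_indL0 μ (⋃ i, t i) (.iUnion ht)] with ω h1 h2
    simp_rw [h1, h2]
    by_cases h : ∃ i, ω ∈ t i
    · obtain ⟨i, hi⟩ := h
      refine tendsto_nhds_of_eventually_eq ?_
      filter_upwards [eventually_gt_atTop i] with n hn
      rw [Set.indicator_of_mem, Set.indicator_of_mem]
      · exact Set.mem_iUnion.2 ⟨i, hi⟩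
      · simp only [Set.mem_iUnion, Finset.mem_range, exists_prop]
        exact ⟨i, hn, hi⟩
    · refine tendsto_nhds_of_eventually_eq ?_
      filter_upwards with n
      rw [Set.indicator_of_notMem, Set.indicator_of_notMem]
      · intro h'; exact h (by simpa using h')
      · simp only [Set.mem_iUnion, Finset.mem_range, exists_prop]
        rintro ⟨i, _, hi⟩
        exact h ⟨i, hi⟩

lemma indL0_nonneg {m0 : MeasurableSpace Ω} {μ : Measure Ω}
    {X : Submodule ℝ (Ω →ₘ[μ] ℝ)} (hX : IsIdealL0 X)
    (hconst : ∀ c : ℝ, AEEqFun.const Ω (β := ℝ) c ∈ X) {φ : ↥X →ₗ[ℝ] ℝ}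
    (hφ : StrictlyPositiveOn X φ) (B : Set Ω) (hB : MeasurableSet B) :
    0 ≤ φ ⟨_, indL0_mem hX hconst B hB⟩ := by
  refine pos_of_strict hφ _ ?_
  filter_upwards [coeFn_indL0 μ B hB] with ω h
  refine le_of_le_of_eq ?_ h.symm
  exact Set.indicator_nonneg (fun _ _ => zero_le_one) _

lemma exists_measure {m0 : MeasurableSpace Ω} {μ : Measure Ω}
    {X : Submodule ℝ (Ω →ₘ[μ] ℝ)} (hX : IsIdealL0 X)
    (hconst : ∀ c : ℝ, AEEqFun.const Ω (β := ℝ) c ∈ X) {φ : ↥X →ₗ[ℝ] ℝ}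
    (hφ : OrderContinuousOn X φ) (hφ' : StrictlyPositiveOn X φ) :
    ∃ ν : Measure Ω, IsFiniteMeasure ν ∧ ν ≪ μ ∧ μ ≪ ν ∧
      ∀ (B : Set Ω) (hB : MeasurableSet B), ν.real B = φ ⟨_, indL0_mem hX hconst B hB⟩ := by
  have hnn := indL0_nonneg hX hconst hφ'
  have hnull : ∀ (B : Set Ω) (hB : MeasurableSet B), μ B = 0 →
      φ ⟨_, indL0_mem hX hconst B hB⟩ = 0 := by
    intro B hB h0
    have : (⟨_, indL0_mem hX hconst B hB⟩ : ↥X) = 0 := by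
      apply Subtype.ext
      apply AEEqFun.ext
      filter_upwards [coeFn_indL0 μ B hB, AEEqFun.coeFn_zero (α := Ω) (β := ℝ) (μ := μ),
        measure_eq_zero_iff_ae_notMem.1 h0] with ω h1 h2 h3
      refine h1.trans (Eq.trans ?_ h2.symm)
      simp [h3]
    rw [this, map_zero]
  let ν : Measure Ω := Measure.ofMeasurable
    (fun B hB => ENNReal.ofReal (φ ⟨_, indL0_mem hX hconst B hB⟩))
    (by rw [hnull ∅ .empty (by simp)]; simp) (by
      intro t ht hd
      have h := indL0_iUnion_hasSum hX hconst hφ t ht hd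
      have hs := (hasSum_iff_tendsto_nat_of_nonneg (fun i => hnn (t i) (ht i)) _).2 h
      rw [← hs.tsum_eq]
      exact ENNReal.ofReal_tsum_of_nonneg (fun i => hnn (t i) (ht i)) hs.summable)
  have hν : ∀ (B : Set Ω) (hB : MeasurableSet B),
      ν B = ENNReal.ofReal (φ ⟨_, indL0_mem hX hconst B hB⟩) := fun B hB =>
    Measure.ofMeasurable_apply B hB
  refine ⟨ν, ⟨?_⟩, ?_, ?_, ?_⟩
  · rw [hν _ .univ]; exact ENNReal.ofReal_lt_top
  · refine Measure.AbsolutelyContinuous.mk fun B hB h0 => ?_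
    rw [hν B hB, hnull B hB h0]; simp
  · refine Measure.AbsolutelyContinuous.mk fun B hB h0 => ?_
    rw [hν B hB, ENNReal.ofReal_eq_zero] at h0
    by_contra hne
    refine absurd (hφ' ⟨_, indL0_mem hX hconst B hB⟩ ?_) (not_lt.2 h0)
    refine lt_of_le_of_ne ?_ ?_
    · rw [← AEEqFun.coeFn_le]
      filter_upwards [coeFn_indL0 μ B hB, AEEqFun.coeFn_zero (α := Ω) (β := ℝ) (μ := μ)]
        with ω h1 h2
      rw [h1, h2]
      exact Set.indicator_nonneg (fun _ _ => zero_le_one) _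
    · intro he
      apply hne
      rw [measure_eq_zero_iff_ae_notMem]
      have he' : indL0 μ B hB = 0 := he.symm
      filter_upwards [coeFn_indL0 μ B hB, AEEqFun.coeFn_zero (α := Ω) (β := ℝ) (μ := μ)]
        with ω h1 h2 h3
      rw [he', h2] at h1
      simp [h3] at h1
  · intro B hB
    rw [Measure.real, hν B hB, ENNReal.toReal_ofReal (hnn B hB)]

/-- The subspace on which `φ` is integration against `ν`. -/
def reprSpace {m0 : MeasurableSpace Ω} {μ : Measure Ω}
    (X : Submodule ℝ (Ω →ₘ[μ] ℝ)) (φ : ↥X →ₗ[ℝ] ℝ) (ν : Measure Ω) (hν : ν ≪ μ) :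
    Submodule ℝ (Ω →ₘ[μ] ℝ) where
  carrier := {x | Integrable x ν ∧ ∃ hx : x ∈ X, φ ⟨x, hx⟩ = ∫ ω, x ω ∂ν}
  zero_mem' := by
    have h0 := hν.ae_eq (AEEqFun.coeFn_zero (α := Ω) (β := ℝ) (μ := μ))
    refine ⟨(integrable_congr h0).2 (integrable_zero _ _ _), X.zero_mem, ?_⟩
    rw [integral_congr_ae h0]
    simp
    exact map_zero φ
  add_mem' := by
    rintro a b ⟨ha, ha', ha2⟩ ⟨hb, hb', hb2⟩
    have h0 := hν.ae_eq (AEEqFun.coeFn_add a b)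
    refine ⟨(integrable_congr h0).2 (ha.add hb), X.add_mem ha' hb', ?_⟩
    rw [integral_congr_ae h0]
    simp only [Pi.add_apply]
    rw [integral_add ha hb, ← ha2, ← hb2, ← map_add]
    rfl
  smul_mem' := by
    rintro c a ⟨ha, ha', ha2⟩
    have h0 := hν.ae_eq (AEEqFun.coeFn_smul c a)
    refine ⟨(integrable_congr h0).2 (ha.smul c), X.smul_mem c ha', ?_⟩
    rw [integral_congr_ae h0]
    simp only [Pi.smul_apply]
    rw [integral_smul, ← ha2, ← map_smul]
    rfl

lemma exists_repr {m0 : MeasurableSpace Ω} {μ : Measure Ω}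
    {X : Submodule ℝ (Ω →ₘ[μ] ℝ)} (hX : IsIdealL0 X)
    (hconst : ∀ c : ℝ, AEEqFun.const Ω (β := ℝ) c ∈ X) {φ : ↥X →ₗ[ℝ] ℝ}
    (hφ : OrderContinuousOn X φ) (hφ' : StrictlyPositiveOn X φ) :
    ∃ ν : Measure Ω, IsFiniteMeasure ν ∧ ν ≪ μ ∧ μ ≪ ν ∧
      ∀ x : ↥X, Integrable (x : Ω →ₘ[μ] ℝ) ν ∧ φ x = ∫ ω, (x : Ω →ₘ[μ] ℝ) ω ∂ν := by
  obtain ⟨ν, hfin, hνμ, hμν, hind⟩ := exists_measure hX hconst hφ hφ'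
  refine ⟨ν, hfin, hνμ, hμν, ?_⟩
  let V := reprSpace X φ ν hνμ
  have hV : ∀ (B : Set Ω) (hB : MeasurableSet B), indL0 μ B hB ∈ V := by
    intro B hB
    have h0 := hνμ.ae_eq (coeFn_indL0 μ B hB)
    refine ⟨(integrable_congr h0).2 ((integrable_const _).indicator hB),
      indL0_mem hX hconst B hB, ?_⟩
    rw [integral_congr_ae h0, integral_indicator hB, ← hind B hB]
    simp
  have hint : ∀ x : ↥X, Integrable (x : Ω →ₘ[μ] ℝ) ν := by
    intro x
    obtain ⟨s, hs1, hs2⟩ := exists_simple_approx (x : Ω →ₘ[μ] ℝ) (AEEqFun.measurable _)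
    refine ⟨(AEEqFun.measurable _).aestronglyMeasurable, ?_⟩
    have habs : (2 : ℝ) • |(x : Ω →ₘ[μ] ℝ)| ∈ X := by
      refine X.smul_mem _ (ideal_mem_of_ae hX x.2 ?_)
      filter_upwards [AEEqFun.coeFn_abs (x : Ω →ₘ[μ] ℝ)] with ω h
      rw [h]; simp
    have hbound : ∀ n, ∫⁻ ω, ‖s n ω‖ₑ ∂ν ≤ ENNReal.ofReal (φ ⟨_, habs⟩) := by
      intro n
      have hm : AEStronglyMeasurable ((s n).map fun r => |r|) μ :=
        (SimpleFunc.measurable _).aestronglyMeasurable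
      have hco := AEEqFun.coeFn_mk _ hm
      obtain ⟨hi, hmem, heq⟩ := simple_mem le_rfl V hV ((s n).map fun r => |r|) _ hco
      have h1 : φ ⟨_, hmem⟩ ≤ φ ⟨_, habs⟩ := by
        rw [← sub_nonneg, ← map_sub]
        refine pos_of_strict hφ' _ ?_
        filter_upwards [hco, AEEqFun.coeFn_abs (x : Ω →ₘ[μ] ℝ),
          AEEqFun.coeFn_smul (2 : ℝ) |(x : Ω →ₘ[μ] ℝ)|,
          AEEqFun.coeFn_sub ((2 : ℝ) • |(x : Ω →ₘ[μ] ℝ)|) (AEEqFun.mk _ hm)] with ω g1 g2 g3 g4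
        refine le_of_le_of_eq ?_ g4.symm
        rw [Pi.sub_apply, g1, g3, Pi.smul_apply, g2, smul_eq_mul, sub_nonneg]
        exact hs1 n ω
      refine le_trans ?_ (ENNReal.ofReal_le_ofReal h1)
      rw [heq, ofReal_integral_eq_lintegral_ofReal hi]
      · refine (lintegral_congr_ae ?_).le
        filter_upwards [hνμ.ae_eq hco] with ω g1
        rw [g1, Real.enorm_eq_ofReal_abs]
        rfl
      · filter_upwards [hνμ.ae_eq hco] with ω g1
        rw [g1]
        exact abs_nonneg _
    have hle : ∫⁻ ω, ‖(x : Ω →ₘ[μ] ℝ) ω‖ₑ ∂ν ≤ ENNReal.ofReal (φ ⟨_, habs⟩) := by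
      calc ∫⁻ ω, ‖(x : Ω →ₘ[μ] ℝ) ω‖ₑ ∂ν
          = ∫⁻ ω, liminf (fun n => ‖s n ω‖ₑ) atTop ∂ν := by
            refine lintegral_congr fun ω => ?_
            exact ((hs2 ω).enorm.liminf_eq).symm
        _ ≤ liminf (fun n => ∫⁻ ω, ‖s n ω‖ₑ ∂ν) atTop :=
            lintegral_liminf_le fun n => (s n).measurable.enorm
        _ ≤ liminf (fun _ : ℕ => ENNReal.ofReal (φ ⟨_, habs⟩)) atTop :=
            liminf_le_liminf (Eventually.of_forall hbound)
        _ = _ := by simp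
    exact lt_of_le_of_lt hle ENNReal.ofReal_lt_top
  have hD : DomClosed X V := by
    intro y x w hw hy hb ht
    have hx := limit_mem hX y x w hw hb ht
    refine ⟨hint ⟨x, hx⟩, hx, ?_⟩
    choose hyi hyX hyφ using hy
    have h1 := oc_dominated' hX hφ (fun n => ⟨y n, hyX n⟩) ⟨x, hx⟩ w hw hb ht
    have h2 : Tendsto (fun n => ∫ ω, y n ω ∂ν) atTop (nhds (∫ ω, x ω ∂ν)) :=
      tendsto_integral_of_dominated_convergence w (fun n => (hyi n).1) (hint ⟨w, hw⟩)
        (fun n => hνμ.ae_le (hb n)) (hνμ.ae_le ht)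
    simp_rw [← hyφ] at h2
    exact tendsto_nhds_unique h1 h2
  intro x
  obtain ⟨_, _, h⟩ := meas_mem le_rfl X V hX hD hV x x.2 _ (AEEqFun.measurable _) (ae_eq_refl _)
  exact ⟨hint x, h⟩

lemma option_aesm {m0 : MeasurableSpace Ω} {μ : Measure Ω} (f y : Ω →ₘ[μ] ℝ)
    (hy : y ∈ optionSpace f) :
    AEStronglyMeasurable[MeasurableSpace.comap (⇑f) (inferInstance : MeasurableSpace ℝ)] y μ := by
  have hf : Measurable[MeasurableSpace.comap (⇑f) (inferInstance : MeasurableSpace ℝ)] (⇑f) :=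
    comap_measurable _
  induction hy using Submodule.span_induction with
  | mem x hx =>
    rcases hx with rfl | ⟨k, rfl⟩
    · exact ⟨fun _ => 1, stronglyMeasurable_const, AEEqFun.coeFn_one⟩
    · refine ⟨_, ?_, coeFn_sub_one f k⟩
      exact Measurable.stronglyMeasurable ((hf.sub_const k).max measurable_const)
  | zero => exact ⟨fun _ => 0, stronglyMeasurable_const, AEEqFun.coeFn_zero⟩
  | add a b _ _ ha hb => exact (ha.add hb).congr (AEEqFun.coeFn_add a b).symm
  | smul c a _ ha => exact (ha.const_smul c).congr (AEEqFun.coeFn_smul c a).symm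

lemma integral_mul_zero {m m0 : MeasurableSpace Ω} {ν : Measure Ω} [IsFiniteMeasure ν]
    (hm : m ≤ m0) {a b : Ω → ℝ} (ha : AEStronglyMeasurable[m] a ν) (hb : Integrable b ν)
    (hab : Integrable (a * b) ν) (h0 : ν[b | m] =ᵐ[ν] 0) : ∫ ω, a ω * b ω ∂ν = 0 := by
  have h1 := condExp_mul_of_aestronglyMeasurable_left ha hab hb
  have h2 := integral_condExp (μ := ν) (f := a * b) hm
  rw [integral_congr_ae h1] at h2
  have h3 : ∫ ω, (a * ν[b | m]) ω ∂ν = 0 := by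
    rw [← integral_zero Ω ℝ (μ := ν)]
    refine integral_congr_ae ?_
    filter_upwards [h0] with ω h
    simp [h]
  rw [h3] at h2
  exact h2.symm

lemma condExp_resid {m m0 : MeasurableSpace Ω} {ν : Measure Ω} [IsFiniteMeasure ν]
    (hm : m ≤ m0) {c : Ω → ℝ} (hc : Integrable c ν) :
    ν[c - ν[c | m] | m] =ᵐ[ν] 0 := by
  have h1 := condExp_sub hc (integrable_condExp (μ := ν) (m := m) (f := c)) m
  have h2 := condExp_condExp_of_le (μ := ν) (f := c) (le_refl m) hm
  filter_upwards [h1, h2] with ω g1 g2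
  rw [g1, Pi.sub_apply, g2]; simp

lemma meas_of_annihilate {m m0 : MeasurableSpace Ω} {μ : Measure Ω}
    {X : Submodule ℝ (Ω →ₘ[μ] ℝ)} (hX : IsIdealL0 X)
    (hconst : ∀ c : ℝ, AEEqFun.const Ω (β := ℝ) c ∈ X) {φ : ↥X →ₗ[ℝ] ℝ}
    (hφ : OrderContinuousOn X φ) (hφ' : StrictlyPositiveOn X φ) (f : Ω →ₘ[μ] ℝ) (g : ↥X)
    (hm : m ≤ m0) (hOm : ∀ y ∈ optionSpace f, AEStronglyMeasurable[m] y μ)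
    (h : ∀ ψ : ↥X →ₗ[ℝ] ℝ, OrderContinuousOn X ψ →
      (∀ y : ↥X, (y : Ω →ₘ[μ] ℝ) ∈ optionSpace f → ψ y = 0) → ψ g = 0) :
    ∃ g' : Ω → ℝ, Measurable[m] g' ∧ ⇑(g : Ω →ₘ[μ] ℝ) =ᵐ[μ] g' := by
  obtain ⟨ν, hfin, hνμ, hμν, hrep⟩ := exists_repr hX hconst hφ hφ'
  have hgi := (hrep g).1
  have hEm : StronglyMeasurable[m] (ν[(g : Ω →ₘ[μ] ℝ) | m]) := stronglyMeasurable_condExp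
  have hEi : Integrable (ν[(g : Ω →ₘ[μ] ℝ) | m]) ν := integrable_condExp
  set e : Ω → ℝ := ν[(g : Ω →ₘ[μ] ℝ) | m] with he
  let c : Ω → ℝ := fun ω => if 0 ≤ (g : Ω →ₘ[μ] ℝ) ω - e ω then 1 else -1
  have hcm : Measurable c := by
    refine Measurable.ite ?_ measurable_const measurable_const
    exact measurableSet_le measurable_const
      ((AEEqFun.measurable _).sub (hEm.measurable.mono hm le_rfl))
  have hcb : ∀ ω, |c ω| ≤ 1 := by
    intro ω; simp only [c]; split_ifs <;> simp
  have hci : Integrable c ν := Integrable.of_bound hcm.aestronglyMeasurable 1 (ae_of_all _ hcb)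
  have hEcm : StronglyMeasurable[m] (ν[c | m]) := stronglyMeasurable_condExp
  have hEci : Integrable (ν[c | m]) ν := integrable_condExp
  have hEcb : ∀ᵐ ω ∂ν, |(ν[c | m]) ω| ≤ 1 :=
    ae_bdd_abs_condExp_of_ae_bdd_abs (ae_of_all _ hcb)
  set d : Ω → ℝ := ν[c | m] with hd
  have hres : ν[c - d | m] =ᵐ[ν] 0 := condExp_resid hm hci
  have hbi : Integrable (c - d) ν := hci.sub hEci
  have hbb : ∀ᵐ ω ∂ν, |(c - d) ω| ≤ 2 := by
    filter_upwards [hEcb] with ω g1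
    rw [Pi.sub_apply]
    have := abs_sub (c ω) (d ω)
    linarith [hcb ω]
  have hmul : ∀ u : Ω → ℝ, Integrable u ν → Integrable (fun ω => u ω * (c - d) ω) ν := fun u hu =>
    hu.mul_bdd hbi.1 hbb
  let ψ : ↥X →ₗ[ℝ] ℝ :=
    { toFun := fun x => ∫ ω, (x : Ω →ₘ[μ] ℝ) ω * (c - d) ω ∂ν
      map_add' := by
        intro x y
        rw [← integral_add (hmul _ (hrep x).1) (hmul _ (hrep y).1)]
        refine integral_congr_ae ?_
        filter_upwards [hνμ.ae_eq (AEEqFun.coeFn_add (x : Ω →ₘ[μ] ℝ) y)] with ω g1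
        have g1 : ((x + y : ↥X) : Ω →ₘ[μ] ℝ) ω = (x : Ω →ₘ[μ] ℝ) ω + (y : Ω →ₘ[μ] ℝ) ω := g1
        rw [g1]; ring
      map_smul' := by
        intro r x
        rw [RingHom.id_apply, smul_eq_mul, ← integral_const_mul]
        refine integral_congr_ae ?_
        filter_upwards [hνμ.ae_eq (AEEqFun.coeFn_smul r (x : Ω →ₘ[μ] ℝ))] with ω g1
        have g1 : ((r • x : ↥X) : Ω →ₘ[μ] ℝ) ω = r * (x : Ω →ₘ[μ] ℝ) ω := g1
        rw [g1]; ring }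
  have hψ : ∀ x : ↥X, ψ x = ∫ ω, (x : Ω →ₘ[μ] ℝ) ω * (c - d) ω ∂ν := fun x => rfl
  have hψoc : OrderContinuousOn X ψ := by
    intro ι _ _ _ y hy
    have habs : ∀ x : ↥X, |(x : Ω →ₘ[μ] ℝ)| ∈ X := by
      intro x
      refine ideal_mem_of_ae hX x.2 ?_
      filter_upwards [AEEqFun.coeFn_abs (x : Ω →ₘ[μ] ℝ)] with ω h
      rw [h]; simp
    have h1 := hφ ι _ inferInstance inferInstance (fun a => ⟨_, habs (y a)⟩) (by
      obtain ⟨z, z1, z2, z3, z4, z5⟩ := hy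
      refine ⟨z, z1, z2, z3, z4, ?_⟩
      filter_upwards [z5] with a ha
      rw [sub_zero] at ha ⊢
      rw [← AEEqFun.coeFn_le] at ha ⊢
      filter_upwards [ha, AEEqFun.coeFn_abs (y a : Ω →ₘ[μ] ℝ),
        AEEqFun.coeFn_abs |(y a : Ω →ₘ[μ] ℝ)|] with ω g1 g2 g3
      rw [g3, g2, abs_abs, ← g2]; exact g1)
    have h2 := h1.const_mul 2
    rw [mul_zero] at h2
    refine squeeze_zero_norm (fun a => ?_) h2
    rw [hψ, (hrep ⟨_, habs (y a)⟩).2, ← integral_const_mul]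
    refine norm_integral_le_of_norm_le ((hrep ⟨_, habs (y a)⟩).1.const_mul 2) ?_
    filter_upwards [hbb, hνμ.ae_eq (AEEqFun.coeFn_abs (y a : Ω →ₘ[μ] ℝ))] with ω g1 g2
    rw [g2, Real.norm_eq_abs, abs_mul, mul_comm]
    gcongr
  have hψ0 : ψ g = 0 := by
    refine h ψ hψoc fun y hy => ?_
    have hym := (hOm y hy).mono_ac hνμ
    exact integral_mul_zero hm hym hbi (hmul _ (hrep y).1) hres
  have h1 : ∫ ω, e ω * (c - d) ω ∂ν = 0 :=
    integral_mul_zero hm hEm.aestronglyMeasurable hbi (hmul _ hEi) hres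
  have hgei : Integrable (⇑(g : Ω →ₘ[μ] ℝ) - e) ν := hgi.sub hEi
  have hdge : Integrable (fun ω => d ω * (⇑(g : Ω →ₘ[μ] ℝ) - e) ω) ν :=
    hgei.bdd_mul hEci.1 hEcb
  have h2 : ∫ ω, d ω * (⇑(g : Ω →ₘ[μ] ℝ) - e) ω ∂ν = 0 :=
    integral_mul_zero hm hEcm.aestronglyMeasurable hgei hdge (condExp_resid hm hgi)
  have h3 : ∫ ω, |(g : Ω →ₘ[μ] ℝ) ω - e ω| ∂ν = 0 := by
    have : ∀ ω, |(g : Ω →ₘ[μ] ℝ) ω - e ω| = ((g : Ω →ₘ[μ] ℝ) ω * (c - d) ω - e ω * (c - d) ω) +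
        d ω * (⇑(g : Ω →ₘ[μ] ℝ) - e) ω := by
      intro ω
      have : |(g : Ω →ₘ[μ] ℝ) ω - e ω| = ((g : Ω →ₘ[μ] ℝ) ω - e ω) * c ω := by
        simp only [c]
        split_ifs with h
        · rw [abs_of_nonneg h, mul_one]
        · rw [abs_of_neg (not_le.1 h)]; ring
      rw [this]
      simp only [Pi.sub_apply]
      ring
    simp_rw [this]
    have hsubi : Integrable (fun ω => (g : Ω →ₘ[μ] ℝ) ω * (c - d) ω - e ω * (c - d) ω) ν :=
      (hmul _ hgi).sub (hmul _ hEi)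
    rw [integral_add hsubi hdge, integral_sub (hmul _ hgi) (hmul _ hEi),
      h1, h2, ← hψ g, hψ0]
    simp
  have hgea : Integrable (fun ω => |(g : Ω →ₘ[μ] ℝ) ω - e ω|) ν := hgei.abs
  rw [integral_eq_zero_iff_of_nonneg (fun _ => abs_nonneg _) hgea] at h3
  refine ⟨e, hEm.measurable, hμν.ae_eq ?_⟩
  filter_upwards [h3] with ω g1
  have : |(g : Ω →ₘ[μ] ℝ) ω - e ω| = 0 := g1
  linarith [abs_eq_zero.1 this]


lemma meas_of_limit {m m0 : MeasurableSpace Ω} {μ : Measure Ω} (y : ℕ → Ω → ℝ) (g : Ω → ℝ)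
    (hy : ∀ n, AEStronglyMeasurable[m] (y n) μ)
    (ht : ∀ᵐ ω ∂μ, Tendsto (fun n => y n ω) atTop (nhds (g ω))) :
    ∃ g' : Ω → ℝ, Measurable[m] g' ∧ g =ᵐ[μ] g' := by
  choose y' hy' hyy using hy
  refine ⟨fun ω => limsup (fun n => y' n ω) atTop,
    Measurable.limsup fun n => (hy' n).measurable, ?_⟩
  filter_upwards [ht, ae_all_iff.2 hyy] with ω h1 h2
  simp_rw [h2] at h1
  exact h1.limsup_eq.symm

/-- Theorem 3.1: Let `X` be an ideal of `L⁰` containing the constants and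
admitting a strictly positive order continuous functional, and `f ∈ X₊`. For `g ∈ X` TFAE:
(a) `g` is a contingent claim on `f` (i.e. `σ(f)`-measurable up to null sets);
(b) `g` is in the `σ(X, Xₙ~)`-closure of the option space `O_f`;
(c) some sequence of portfolios of options on `f` converges a.e. to `g`. -/
theorem spanning_power_of_options
    {m0 : MeasurableSpace Ω} {μ : Measure Ω} [IsProbabilityMeasure μ]
    (X : Submodule ℝ (Ω →ₘ[μ] ℝ)) (hX : IsIdealL0 X)
    (hconst : ∀ c : ℝ, AEEqFun.const Ω (β := ℝ) c ∈ X)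
    (hφ : ∃ φ : ↥X →ₗ[ℝ] ℝ, OrderContinuousOn X ⇑φ ∧ StrictlyPositiveOn X ⇑φ)
    (f : ↥X) (hf : 0 ≤ (f : Ω →ₘ[μ] ℝ)) (g : ↥X) :
    ((∃ g' : Ω → ℝ,
        Measurable[MeasurableSpace.comap (⇑(f : Ω →ₘ[μ] ℝ))
          (inferInstance : MeasurableSpace ℝ)] g' ∧ ⇑(g : Ω →ₘ[μ] ℝ) =ᵐ[μ] g') ↔
      g ∈ @closure _ (weakOCTopology X)
        {x : ↥X | (x : Ω →ₘ[μ] ℝ) ∈ optionSpace (f : Ω →ₘ[μ] ℝ)}) ∧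
    ((∃ g' : Ω → ℝ,
        Measurable[MeasurableSpace.comap (⇑(f : Ω →ₘ[μ] ℝ))
          (inferInstance : MeasurableSpace ℝ)] g' ∧ ⇑(g : Ω →ₘ[μ] ℝ) =ᵐ[μ] g') ↔
      ∃ gn : ℕ → ↥X, (∀ n, (gn n : Ω →ₘ[μ] ℝ) ∈ optionSpace (f : Ω →ₘ[μ] ℝ)) ∧
        ∀ᵐ ω ∂μ, Tendsto (fun n => (gn n : Ω →ₘ[μ] ℝ) ω) atTop
          (nhds ((g : Ω →ₘ[μ] ℝ) ω))) := by
  have hOX : optionSpace (f : Ω →ₘ[μ] ℝ) ≤ X := by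
    refine Submodule.span_le.2 ?_
    rintro x (rfl | ⟨k, rfl⟩)
    · exact one_mem_of_const hconst
    · refine ideal_mem_of_ae hX (X.sub_mem f.2 (X.smul_mem k (one_mem_of_const hconst))) ?_
      filter_upwards [coeFn_sub_one (f : Ω →ₘ[μ] ℝ) k,
        AEEqFun.coeFn_sub (f : Ω →ₘ[μ] ℝ) (k • (1 : Ω →ₘ[μ] ℝ)),
        AEEqFun.coeFn_smul k (1 : Ω →ₘ[μ] ℝ),
        AEEqFun.coeFn_one (α := Ω) (β := ℝ) (μ := μ)] with ω h1 h2 h3 h4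
      rw [h1, h2, Pi.sub_apply, h3, Pi.smul_apply, h4, Pi.one_apply, smul_eq_mul, mul_one]
      rw [abs_of_nonneg (le_max_right _ _)]
      exact max_le (le_abs_self _) (abs_nonneg _)
  have hcl := mem_weak_closure_iff X ((optionSpace (f : Ω →ₘ[μ] ℝ)).comap X.subtype) g
  refine ⟨⟨fun ha => hcl.2 fun ψ hψ h0 => ?_, fun hb => ?_⟩, ⟨fun ha => ?_, ?_⟩⟩
  · have := density X ((LinearMap.ker ψ).map X.subtype) hX (ker_domClosed hX hψ) hconst f
      (fun y hy => ⟨⟨y, hOX hy⟩, h0 _ hy, rfl⟩) g g.2 ha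
    obtain ⟨g1, hg1, hgg⟩ := this
    have : g1 = g := Subtype.ext hgg
    rw [← this]; exact hg1
  · obtain ⟨φ, hφ1, hφ2⟩ := hφ
    exact meas_of_annihilate hX hconst hφ1 hφ2 f g (comap_le _) (option_aesm _)
      fun ψ hψ h0 => hcl.1 hb ψ hψ h0
  · have := density X (measClosure (optionSpace (f : Ω →ₘ[μ] ℝ))) hX
      (measClosure_domClosed X _) hconst f (le_measClosure _) g g.2 ha
    obtain ⟨y, hy, hyt⟩ := exists_seq_of_measClosure _ _ this
    exact ⟨fun n => ⟨y n, hOX (hy n)⟩, hy, hyt⟩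
  · rintro ⟨y, hy, hyt⟩
    exact meas_of_limit _ _ (fun n => option_aesm _ _ (hy n)) hyt
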